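/- Assume (ℵ) ℵ_{ω+1} → (ω₁-st)²_{ℵ_ω,<ω₁}, i.e., for every f:[ℵ_{ω+1}]²→ℵ_ω there exists A⊆ℵ_{ω+1} of order type ω₁, stationary in sup A, with f''[A]² countable, and (ℶ) ω₁ →^poly (par(<ω₁))²_{<ω₁-t-bdd}. Then ℵ_{ω+1} →^poly (ω₁-st)²_{<ℵ_{ω+1}-t-bdd}: every normal <ℵ_{ω+1}-type bounded coloring f:[ℵ_{ω+1}]²→ℵ_{ω+1} admits an f-rainbow set of order type ω₁ that is stationary in its supremum. -/

import Mathlib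

open Set Cardinal Ordinal

universe u

/-- `A` has order type `θ`: there is an order isomorphism from `Iio θ` onto `A`. -/
def HasOType (A : Set Ordinal.{u}) (θ : Ordinal.{u}) : Prop :=
  Nonempty (Set.Iio θ ≃o A)

/-- The order type of `A` is at most `γ`: `A` order-embeds into `Iio γ`. -/
def OTypeLE (A : Set Ordinal.{u}) (γ : Ordinal.{u}) : Prop :=
  Nonempty (A ↪o Set.Iio γ)

/-- `A` is `f`-rainbow: `f` is injective on increasing pairs from `A`. -/
def IsRainbow (f : Ordinal → Ordinal → Ordinal) (A : Set Ordinal) : Prop :=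
  ∀ α ∈ A, ∀ β ∈ A, ∀ γ ∈ A, ∀ δ ∈ A,
    α < β → γ < δ → f α β = f γ δ → α = γ ∧ β = δ

/-- `f` is a normal coloring on pairs below `κ`: equal colors force equal top points. -/
def IsNormalColoring (f : Ordinal → Ordinal → Ordinal) (κ : Ordinal) : Prop :=
  ∀ α β γ δ : Ordinal, α < β → β < κ → γ < δ → δ < κ → f α β = f γ δ → β = δ

/-- `f` is 2-bounded: every fiber of `f` on pairs below `κ` has at most two elements. -/
def TwoBounded (f : Ordinal → Ordinal → Ordinal) (κ : Ordinal) : Prop :=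
  ∀ ξ : Ordinal, {p : Ordinal × Ordinal | p.1 < p.2 ∧ p.2 < κ ∧ f p.1 p.2 = ξ}.encard ≤ 2

/-- `f` is `<ω`-bounded: every fiber of `f` on pairs below `κ` is finite. -/
def FinBounded (f : Ordinal → Ordinal → Ordinal) (κ : Ordinal) : Prop :=
  ∀ ξ : Ordinal, {p : Ordinal × Ordinal | p.1 < p.2 ∧ p.2 < κ ∧ f p.1 p.2 = ξ}.Finite

/-- `f` is `ω`-bounded: every fiber of `f` on pairs below `κ` is countable. -/
def OmegaBounded (f : Ordinal → Ordinal → Ordinal) (κ : Ordinal) : Prop :=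
  ∀ ξ : Ordinal, {p : Ordinal × Ordinal | p.1 < p.2 ∧ p.2 < κ ∧ f p.1 p.2 = ξ}.Countable

/-- `A` is a closed set of ordinals: any nonzero `α` below `sup A` which is the
supremum of the elements of `A` below it belongs to `A`. -/
def IsClosedSet (A : Set Ordinal) : Prop :=
  ∀ α : Ordinal, α < sSup A → α ≠ 0 → sSup (A ∩ Set.Iio α) = α → α ∈ A

/-- `C` is club in `δ`: a subset of `δ`, unbounded in `δ`, and closed below `δ`. -/
def IsClubIn (C : Set Ordinal) (δ : Ordinal) : Prop :=
  C ⊆ Set.Iio δ ∧ (∀ α < δ, ∃ β ∈ C, α ≤ β) ∧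
  ∀ α : Ordinal, α < δ → α ≠ 0 → sSup (C ∩ Set.Iio α) = α → α ∈ C

/-- `A` is stationary in `δ`: it meets every club in `δ`. -/
def IsStationaryIn (A : Set Ordinal) (δ : Ordinal) : Prop :=
  ∀ C : Set Ordinal, IsClubIn C δ → (A ∩ C).Nonempty

/-- `f` is `<bd`-type bounded on pairs below `κ`: some `γ < bd` bounds the order
type of every color class `t_{ηβ} = {ξ < β | f ξ β = f η β}`. -/
def TypeBounded (f : Ordinal → Ordinal → Ordinal) (κ bd : Ordinal) : Prop :=
  ∃ γ < bd, ∀ η β : Ordinal, η < β → β < κ →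
    OTypeLE {ξ : Ordinal | ξ < β ∧ f ξ β = f η β} γ

/-- `f` is `<bd`-type bounded relative to the set `A`. -/
def TypeBoundedOn (f : Ordinal → Ordinal → Ordinal) (A : Set Ordinal) (bd : Ordinal) : Prop :=
  ∃ γ < bd, ∀ η ∈ A, ∀ β ∈ A, η < β →
    OTypeLE {ξ : Ordinal | ξ ∈ A ∧ ξ < β ∧ f ξ β = f η β} γ

/-! Record each `η` in the color class `t_{ηβ} = {ξ < β | f(ξ, β) = f(η, β)}` by its position
`pos(η, β)` in the increasing enumeration of that class. The type bound keeps all positions below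
some `γ < μ⁺` (here `μ = ℵ_ω`, `μ⁺ = κ = ℵ_{ω+1}`, `ν = ℵ₁`), so `pos` is, up to an injection of `γ`
into `μ`, a coloring with values in `μ`, and the arrow `κ → (ν-st)²_{μ,<ν}` provides a set `A` of
type `ν`, stationary in its supremum, on whose pairs `pos` takes fewer than `ν` values. Along a
class the position strictly increases, so each class of `f` restricted to `A` embeds into this small
set of positions: on `A`, `f` is `<ν`-type bounded. Transported along the enumeration of `A`, with
its colors injected into `ν`, it is a coloring of `ν` to which `ν →^poly (par(<ν))²_{<ν-t-bdd}`
applies, and `A` splits into fewer than `ν` rainbow sets. Since `sup A` has cofinality `ν`, regular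
and uncountable, one of them is stationary in `sup A`, hence cofinal in it and of full type `ν`. -/

universe v w x y z t

section Stationary

variable {α β : Type*} [LinearOrder α] [LinearOrder β]

theorem isCofinal_of_isStationary {s : Set α} (hs : IsStationary s) : IsCofinal s := by
  intro a
  have hIci : IsClub (Ici a) := ⟨(isUpperSet_Ici a).dirSupClosed, fun b ↦
    ⟨max a b, le_max_left a b, le_max_right a b⟩⟩
  obtain ⟨b, hbs, hab⟩ := hs hIci
  exact ⟨b, hbs, hab⟩

theorem isClub_preimage_orderIso {t : Set β} (ht : IsClub t) (e : α ≃o β) :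
    IsClub (e ⁻¹' t) := by
  refine ⟨?_, fun a ↦ ?_⟩
  · intro d hd hne _ a ha
    exact ht.isLUB_mem (image_subset_iff.2 hd) (hne.image e) (e.isLUB_image'.2 ha)
  · obtain ⟨b, hb, hab⟩ := ht.isCofinal (e a)
    exact ⟨e.symm b, by simpa using hb, by simpa [OrderIso.le_symm_apply] using hab⟩

theorem isStationary_preimage_orderIso {s : Set β} (hs : IsStationary s) (e : α ≃o β) :
    IsStationary (e ⁻¹' s) := by
  intro t ht
  obtain ⟨b, hbs, hbt⟩ := hs (isClub_preimage_orderIso ht e.symm)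
  exact ⟨e.symm b, by simpa using hbs, hbt⟩

theorem sSup_inter_Iio_eq_iff {C : Set Ordinal.{u}} {α : Ordinal.{u}} :
    sSup (C ∩ Iio α) = α ↔ ∀ x < α, ∃ c ∈ C, x < c ∧ c < α := by
  have hb : BddAbove (C ∩ Iio α) := bddAbove_Iio.mono inter_subset_right
  have hle : sSup (C ∩ Iio α) ≤ α := csSup_le' fun x hx ↦ hx.2.le
  rw [← hle.ge_iff_eq]
  simp only [← forall_lt_iff_le, lt_csSup_iff' hb]
  grind

theorem isClubIn_iff {C : Set Ordinal.{u}} {δ : Ordinal.{u}} :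
    IsClubIn C δ ↔ C ⊆ Iio δ ∧ IsClub ((↑) ⁻¹' C : Set (Iio δ)) := by
  refine and_congr_right fun hC ↦ ?_
  rw [isClub_iff, and_comm]
  refine and_congr ⟨fun h d hd hne _ a ha ↦ ?_, fun h α hα hα0 hsup ↦ ?_⟩
    ⟨fun h x ↦ ?_, fun h α hα ↦ ?_⟩
  · by_contra haC
    refine haC (h a a.2 ?_ (sSup_inter_Iio_eq_iff.2 fun x hx ↦ ?_))
    · obtain ⟨b, hb⟩ := hne
      have hba : b < a := (ha.1 hb).lt_of_ne fun h ↦ haC (h ▸ hd hb)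
      exact (bot_le.trans_lt (show (b : Ordinal) < a from hba)).ne'
    · obtain ⟨c, hc, hxc⟩ := (lt_isLUB_iff ha).1 (show (⟨x, hx.trans a.2⟩ : Iio δ) < a from hx)
      exact ⟨c, hd hc, hxc, (ha.1 hc).lt_of_ne fun h ↦ haC (h ▸ hd hc)⟩
  · rw [sSup_inter_Iio_eq_iff] at hsup
    have hlub : IsLUB ((↑) ⁻¹' (C ∩ Iio α) : Set (Iio δ)) ⟨α, hα⟩ := by
      refine ⟨fun x hx ↦ hx.2.le, fun b hb ↦ le_of_not_gt fun hbα ↦ ?_⟩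
      obtain ⟨c, hc, hbc, hcα⟩ := hsup b hbα
      exact (hb (a := ⟨c, hC hc⟩) ⟨hc, hcα⟩).not_gt hbc
    obtain ⟨c, hc, -, hcα⟩ := hsup 0 (pos_iff_ne_zero.2 hα0)
    exact h (preimage_mono inter_subset_left) ⟨⟨c, hC hc⟩, hc, hcα⟩ (.of_linearOrder _) hlub
  · obtain ⟨c, hc, hxc⟩ := h x x.2
    exact ⟨⟨c, hC hc⟩, hc, hxc⟩
  · obtain ⟨c, hc, hαc⟩ := h ⟨α, hα⟩
    exact ⟨c, hc, hαc⟩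

theorem isStationaryIn_iff {A : Set Ordinal.{u}} {δ : Ordinal.{u}} :
    IsStationaryIn A δ ↔ IsStationary ((↑) ⁻¹' A : Set (Iio δ)) := by
  refine ⟨fun h t ht ↦ ?_, fun h C hC ↦ ?_⟩
  · have hclub : IsClubIn ((↑) '' t) δ := isClubIn_iff.2
      ⟨Subtype.coe_image_subset _ t, by rwa [preimage_image_eq t Subtype.val_injective]⟩
    obtain ⟨_, hxA, x, hxt, rfl⟩ := h _ hclub
    exact ⟨x, hxA, hxt⟩
  · obtain ⟨x, hxA, hxC⟩ := h (isClubIn_iff.1 hC).2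
    exact ⟨x, hxA, hxC⟩

end Stationary

section OrderType

variable {ν : Cardinal.{u}} {A B : Set Ordinal.{u}} {θ : Ordinal.{u}}

theorem hasOType_iff : HasOType A θ ↔ typeLT A = Ordinal.lift.{u + 1} θ := by
  rw [← type_lt_Iio, eq_comm, Ordinal.type_eq]
  exact ⟨fun ⟨e⟩ ↦ ⟨e.toRelIsoLT⟩, fun ⟨e⟩ ↦ ⟨OrderIso.ofRelIsoLT e⟩⟩

theorem exists_hasOType_of_mk_lt (hA : #A < Cardinal.lift.{u + 1} ν) :
    ∃ γ < ν.ord, HasOType A γ := by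
  have htype : typeLT A < Ordinal.lift.{u + 1} ν.ord := by
    rwa [lift_ord, lt_ord, card_type]
  obtain ⟨γ, hγ, hγA⟩ := Ordinal.lt_lift_iff.1 htype
  exact ⟨γ, hγ, hasOType_iff.2 hγA.symm⟩

theorem HasOType.bddAbove (hA : HasOType A θ) : BddAbove A :=
  have : Small.{u} A := small_map hA.some.symm.toEquiv
  Ordinal.bddAbove_of_small

theorem HasOType.mk_eq (hA : HasOType A θ) : #A = Cardinal.lift.{u + 1} θ.card := by
  rw [← Cardinal.mk_Iio_ordinal]
  exact mk_congr hA.some.symm.toEquiv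

theorem HasOType.lt_sSup {a : Ordinal.{u}} (hA : HasOType A θ) (hθ : Order.IsSuccLimit θ)
    (ha : a ∈ A) : a < sSup A := by
  have hbdd := hA.bddAbove
  obtain ⟨e⟩ := hA
  have hsucc : Order.succ (e.symm ⟨a, ha⟩ : Ordinal) < θ := hθ.succ_lt (e.symm ⟨a, ha⟩).2
  refine (lt_csSup_iff' hbdd).2 ⟨e ⟨_, hsucc⟩, (e _).2, ?_⟩
  exact e.symm_apply_lt.1
    (show e.symm ⟨a, ha⟩ < ⟨_, hsucc⟩ from Order.lt_succ (e.symm ⟨a, ha⟩ : Ordinal))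

theorem HasOType.cof_Iio_sSup (hA : HasOType A θ) (hθ : Order.IsSuccLimit θ) :
    Order.cof (Iio (sSup A)) = Cardinal.lift.{u + 1} θ.cof := by
  let i : A → Iio (sSup A) := fun a ↦ ⟨a, hA.lt_sSup hθ a.2⟩
  have hi : StrictMono i := fun _ _ h ↦ h
  have hcof : IsCofinal (range i) := fun x ↦ by
    obtain ⟨a, ha, hxa⟩ := (lt_csSup_iff' hA.bddAbove).1 x.2
    exact ⟨i ⟨a, ha⟩, mem_range_self _, hxa.le⟩
  rw [← Order.cof_congr_of_strictMono hi hcof, ← hA.some.cof_congr, cof_Iio, lift_cof]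

theorem HasOType.sSup_eq_of_isStationaryIn (hA : HasOType A θ) (hθ : Order.IsSuccLimit θ)
    (hBA : B ⊆ A) (hB : IsStationaryIn B (sSup A)) : sSup B = sSup A := by
  have hbdd := hA.bddAbove
  refine (csSup_le_csSup' hbdd hBA).antisymm (le_of_forall_lt fun x hx ↦ ?_)
  obtain ⟨a, ha, hxa⟩ := (lt_csSup_iff' hbdd).1 hx
  obtain ⟨b, hb, hab⟩ :=
    isCofinal_of_isStationary (isStationaryIn_iff.1 hB) ⟨a, hA.lt_sSup hθ ha⟩
  exact hxa.trans_le (le_csSup_of_le (hbdd.mono hBA) hb hab)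

theorem HasOType.of_isStationaryIn_sSup (hν : ν.IsRegular) (hA : HasOType A ν.ord)
    (hBA : B ⊆ A) (hB : IsStationaryIn B (sSup A)) : HasOType B ν.ord := by
  rw [hasOType_iff] at hA ⊢
  refine ((type_mono hBA).trans_eq hA).antisymm ?_
  rw [lift_ord]
  refine le_trans ?_ (Cardinal.ord_le_type _)
  rw [ord_le_ord]
  calc Cardinal.lift.{u + 1} ν = Order.cof (Iio (sSup A)) := by
        rw [(hasOType_iff.2 hA).cof_Iio_sSup (isSuccLimit_ord hν.aleph0_le), hν.cof_ord]
    _ ≤ #((↑) ⁻¹' B : Set (Iio (sSup A))) :=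
        Order.cof_le (isCofinal_of_isStationary (isStationaryIn_iff.1 hB))
    _ ≤ #B := mk_preimage_of_injective _ _ Subtype.val_injective

theorem HasOType.exists_fiber_isStationaryIn (hν : ν.IsRegular) (hν₀ : ℵ₀ < ν)
    (hA : HasOType A ν.ord) (hst : IsStationaryIn A (sSup A)) {γ : Ordinal.{v}}
    (hγ : Cardinal.lift.{u} γ.card < Cardinal.lift.{v} ν) {g : Ordinal.{u} → Ordinal.{v}}
    (hg : MapsTo g A (Iio γ)) :
    ∃ i < γ, HasOType {ξ ∈ A | g ξ = i} ν.ord ∧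
      IsStationaryIn {ξ ∈ A | g ξ = i} (sSup {ξ ∈ A | g ξ = i}) := by
  have hlim := isSuccLimit_ord hν₀.le
  have hcof : Order.cof (Iio (sSup A)) = Cardinal.lift.{u + 1} ν := by
    rw [hA.cof_Iio_sSup hlim, hν.cof_ord]
  let fiber (i : Iio γ) : Set Ordinal := {ξ ∈ A | g ξ = i}
  have hunion : ((↑) ⁻¹' A : Set (Iio (sSup A))) = ⋃ i, (↑) ⁻¹' fiber i := by
    ext x
    simpa [fiber] using fun hx ↦ hg hx
  obtain ⟨i, hi⟩ : ∃ i, IsStationary ((↑) ⁻¹' fiber i : Set (Iio (sSup A))) := by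
    rw [isStationaryIn_iff, hunion] at hst
    refine (isStationary_iUnion_iff ?_ ?_).1 hst
    · rw [hcof]
      simpa using hν₀.ne'
    · rw [hcof, Cardinal.mk_Iio_ordinal]
      simpa using Cardinal.lift_lt.{_, max (u + 1) (v + 1)}.2 hγ
  have hst' : IsStationaryIn (fiber i) (sSup A) := isStationaryIn_iff.2 hi
  have hsub : fiber i ⊆ A := sep_subset A _
  refine ⟨i, i.2, hA.of_isStationaryIn_sSup hν hsub hst', ?_⟩
  rwa [← hA.sSup_eq_of_isStationaryIn hlim hsub hst'] at hst'

end OrderType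

section Lift

variable {A : Set Ordinal.{u}} {B : Set Ordinal.{v}}

theorem image_lift_Iio (a : Ordinal.{u}) :
    Ordinal.lift.{v} '' Iio a = Iio (Ordinal.lift.{v} a) :=
  liftInitialSeg.image_Iio a

theorem image_lift_Iio_congr {a : Ordinal.{u}} {b : Ordinal.{v}}
    (h : Ordinal.lift.{v} a = Ordinal.lift.{u} b) :
    Ordinal.lift.{v} '' Iio a = Ordinal.lift.{u} '' Iio b := by
  rw [image_lift_Iio, image_lift_Iio, h]

theorem lift_mem_image_lift_iff {x : Ordinal.{u}} :
    Ordinal.lift.{v} x ∈ Ordinal.lift.{v} '' A ↔ x ∈ A :=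
  liftInitialSeg.injective.mem_set_image

theorem exists_orderIso_of_image_lift_eq
    (h : Ordinal.lift.{v} '' A = Ordinal.lift.{u} '' B) :
    ∃ e : A ≃o B, ∀ x, Ordinal.lift.{u} (e x : Ordinal) = Ordinal.lift.{v} (x : Ordinal) := by
  let eA := (liftInitialSeg.{v, u}.strictMono.strictMonoOn A).orderIso
  let eB := (liftInitialSeg.{u, v}.strictMono.strictMonoOn B).orderIso
  refine ⟨(eA.trans (OrderIso.setCongr _ _ h)).trans eB.symm, fun x ↦ ?_⟩
  exact congrArg Subtype.val (eB.apply_symm_apply (OrderIso.setCongr _ _ h (eA x)))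

theorem HasOType.of_image_lift_eq {θ : Ordinal.{u}} {θ' : Ordinal.{v}} (hA : HasOType A θ)
    (hAB : Ordinal.lift.{v} '' A = Ordinal.lift.{u} '' B)
    (hθ : Ordinal.lift.{v} θ = Ordinal.lift.{u} θ') : HasOType B θ' := by
  obtain ⟨e, -⟩ := exists_orderIso_of_image_lift_eq (image_lift_Iio_congr hθ)
  obtain ⟨e', -⟩ := exists_orderIso_of_image_lift_eq hAB
  exact ⟨(e.symm.trans hA.some).trans e'⟩

theorem lift_sSup_of_bddAbove (hA : BddAbove A) :
    Ordinal.lift.{v} (sSup A) = sSup (Ordinal.lift.{v} '' A) := by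
  obtain rfl | hne := A.eq_empty_or_nonempty
  · simp
  · exact liftInitialSeg.{v, u}.isNormal.map_sSup hne hA

theorem IsStationaryIn.of_image_lift_eq {a : Ordinal.{u}} {b : Ordinal.{v}}
    (hA : IsStationaryIn A a) (hAB : Ordinal.lift.{v} '' A = Ordinal.lift.{u} '' B)
    (hab : Ordinal.lift.{v} a = Ordinal.lift.{u} b) : IsStationaryIn B b := by
  obtain ⟨e, he⟩ := exists_orderIso_of_image_lift_eq (image_lift_Iio_congr hab)
  have hpre : e.symm ⁻¹' ((↑) ⁻¹' A) = (↑) ⁻¹' B := by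
    ext y
    have hy : Ordinal.lift.{v} (e.symm y : Ordinal) = Ordinal.lift.{u} (y : Ordinal) := by
      rw [← he, e.apply_symm_apply]
    rw [mem_preimage, mem_preimage, mem_preimage, ← lift_mem_image_lift_iff, hy, hAB,
      lift_mem_image_lift_iff]
  rw [isStationaryIn_iff] at hA ⊢
  rw [← hpre]
  exact isStationary_preimage_orderIso hA e.symm

theorem exists_bijOn_strictMonoOn {θ : Ordinal.{u}} {θ' : Ordinal.{v}} (hA : HasOType A θ)
    (hθ : Ordinal.lift.{v} θ = Ordinal.lift.{u} θ') :
    ∃ J : Ordinal.{v} → Ordinal.{u}, BijOn J (Iio θ') A ∧ StrictMonoOn J (Iio θ') := by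
  obtain ⟨e, -⟩ := exists_orderIso_of_image_lift_eq (image_lift_Iio_congr hθ.symm)
  let E : Iio θ' ≃o A := e.trans hA.some
  obtain ⟨J, hJ⟩ := Subtype.val_injective.surjective_comp_right fun x ↦ (E x : Ordinal.{u})
  replace hJ (x : Iio θ') : J x = E x := congrFun hJ x
  have hmono : StrictMonoOn J (Iio θ') := fun x hx y hy hxy ↦ by
    rw [hJ ⟨x, hx⟩, hJ ⟨y, hy⟩]
    exact E.strictMono (show (⟨x, hx⟩ : Iio θ') < ⟨y, hy⟩ from hxy)
  refine ⟨J, ⟨fun x hx ↦ hJ ⟨x, hx⟩ ▸ (E ⟨x, hx⟩).2, hmono.injOn, fun a ha ↦ ?_⟩, hmono⟩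
  exact ⟨E.symm ⟨a, ha⟩, (E.symm ⟨a, ha⟩).2, by rw [hJ, E.apply_symm_apply]⟩

theorem exists_injOn_Iio_ord {c : Cardinal.{v}}
    (hA : Cardinal.lift.{v + 1} #A ≤ Cardinal.lift.{max (u + 1) (v + 1)} c) :
    ∃ e : Ordinal.{u} → Ordinal.{v}, MapsTo e A (Iio c.ord) ∧ InjOn e A := by
  obtain ⟨k⟩ : Nonempty (A ↪ Iio c.ord) := by
    rw [← Cardinal.lift_mk_le', Cardinal.mk_Iio_ordinal, card_ord]
    simpa using hA
  obtain ⟨e, he⟩ := Subtype.val_injective.surjective_comp_right fun x ↦ (k x : Ordinal.{v})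
  replace he (x : A) : e x = k x := congrFun he x
  refine ⟨e, fun x hx ↦ he ⟨x, hx⟩ ▸ (k ⟨x, hx⟩).2, fun x hx y hy hxy ↦ ?_⟩
  rw [he ⟨x, hx⟩, he ⟨y, hy⟩] at hxy
  exact congrArg Subtype.val (k.injective (Subtype.ext hxy))

end Lift

section Coloring

/-- The set `f''[A]²` of colors that the coloring `f` takes on pairs from `A`. -/
def pairImage (f : Ordinal.{u} → Ordinal.{u} → Ordinal.{v}) (A : Set Ordinal.{u}) :
    Set Ordinal.{v} :=
  {ξ | ∃ α ∈ A, ∃ β ∈ A, α < β ∧ f α β = ξ}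

theorem pairImage_comp (e : Ordinal.{v} → Ordinal.{w}) (f : Ordinal.{u} → Ordinal.{u} → Ordinal.{v})
    (A : Set Ordinal.{u}) : pairImage (fun α β ↦ e (f α β)) A = e '' pairImage f A := by
  ext ξ
  simp only [pairImage, mem_image, mem_ofPred_eq]
  grind

theorem mk_pairImage_le (f : Ordinal.{u} → Ordinal.{u} → Ordinal.{v}) (A : Set Ordinal.{u}) :
    Cardinal.lift.{u + 1} #(pairImage f A) ≤ Cardinal.lift.{v + 1} (#A * #A) := by
  have hsub : pairImage f A ⊆ (fun p : A × A ↦ f p.1 p.2) '' univ := by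
    rintro _ ⟨α, hα, β, hβ, -, rfl⟩
    exact ⟨(⟨α, hα⟩, ⟨β, hβ⟩), mem_univ _, rfl⟩
  calc Cardinal.lift.{u + 1} #(pairImage f A)
      ≤ Cardinal.lift.{u + 1} #((fun p : A × A ↦ f p.1 p.2) '' univ) :=
        Cardinal.lift_le.2 (mk_le_mk_of_subset hsub)
    _ ≤ Cardinal.lift.{v + 1} #(univ : Set (A × A)) := mk_image_le_lift
    _ = Cardinal.lift.{v + 1} (#A * #A) := by rw [mk_univ, mul_def]

section TypeBounded

variable {f : Ordinal.{u} → Ordinal.{u} → Ordinal.{v}} {A : Set Ordinal.{u}}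

theorem OTypeLE.exists_strictMonoOn {γ : Ordinal.{u}} (hA : OTypeLE A γ) :
    ∃ p : Ordinal.{u} → Ordinal.{u}, MapsTo p A (Iio γ) ∧ StrictMonoOn p A := by
  obtain ⟨e⟩ := hA
  obtain ⟨p, hp⟩ := Subtype.val_injective.surjective_comp_right fun x ↦ (e x : Ordinal.{u})
  replace hp (x : A) : p x = e x := congrFun hp x
  refine ⟨p, fun x hx ↦ hp ⟨x, hx⟩ ▸ (e ⟨x, hx⟩).2, fun x hx y hy hxy ↦ ?_⟩
  rw [hp ⟨x, hx⟩, hp ⟨y, hy⟩]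
  exact e.strictMono (show (⟨x, hx⟩ : A) < ⟨y, hy⟩ from hxy)

/-- `pos` is a position function for `f` on `A`: for each `β ∈ A`, the map `ξ ↦ pos ξ β` is
strictly increasing on the part in `A` of every color class `t_{ηβ}`. It abstracts the position of
`ξ` in the increasing enumeration of its class. -/
def IsPositionFun (pos : Ordinal.{u} → Ordinal.{u} → Ordinal.{u})
    (f : Ordinal.{u} → Ordinal.{u} → Ordinal.{v}) (A : Set Ordinal.{u}) : Prop :=
  ∀ ξ ∈ A, ∀ η ∈ A, ∀ β ∈ A, ξ < η → η < β → f ξ β = f η β → pos ξ β < pos η β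

theorem IsPositionFun.mono {pos : Ordinal.{u} → Ordinal.{u} → Ordinal.{u}} {B : Set Ordinal.{u}}
    (h : IsPositionFun pos f B) (hAB : A ⊆ B) : IsPositionFun pos f A :=
  fun ξ hξ η hη β hβ ↦ h ξ (hAB hξ) η (hAB hη) β (hAB hβ)

theorem TypeBounded.exists_isPositionFun {κ bd : Ordinal.{u}} (hf : TypeBounded f κ bd) :
    ∃ γ < bd, ∃ pos, IsPositionFun pos f (Iio κ) ∧ pairImage pos (Iio κ) ⊆ Iio γ := by
  obtain ⟨γ, hγ, hfγ⟩ := hf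
  choose! p hpγ hp using fun t : Set Ordinal.{u} ↦ OTypeLE.exists_strictMonoOn (A := t) (γ := γ)
  refine ⟨γ, hγ, fun η β ↦ p {ξ | ξ < β ∧ f ξ β = f η β} η, ?_, ?_⟩
  · intro ξ _ η _ β hβ hξη hηβ hcol
    simp only [hcol]
    exact hp _ (hfγ η β hηβ hβ) ⟨hξη.trans hηβ, hcol⟩ ⟨hηβ, rfl⟩ hξη
  · rintro _ ⟨η, -, β, hβ, hηβ, rfl⟩
    exact hpγ _ (hfγ η β hηβ hβ) ⟨hηβ, rfl⟩

theorem IsPositionFun.typeBoundedOn {pos : Ordinal.{u} → Ordinal.{u} → Ordinal.{u}}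
    (h : IsPositionFun pos f A) {c : Cardinal.{u}}
    (hc : #(pairImage pos A) < Cardinal.lift.{u + 1} c) : TypeBoundedOn f A c.ord := by
  obtain ⟨δ, hδ, ⟨e⟩⟩ := exists_hasOType_of_mk_lt hc
  refine ⟨δ, hδ, fun η _ β hβ _ ↦ ?_⟩
  let i : {ξ | ξ ∈ A ∧ ξ < β ∧ f ξ β = f η β} → pairImage pos A :=
    fun ξ ↦ ⟨pos ξ β, ξ, ξ.2.1, β, hβ, ξ.2.2.1, rfl⟩
  have hi : StrictMono i := fun ξ ζ hξζ ↦
    h ξ ξ.2.1 ζ ζ.2.1 β hβ hξζ ζ.2.2.1 (ξ.2.2.2.trans ζ.2.2.2.symm)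
  exact ⟨(OrderEmbedding.ofStrictMono i hi).trans e.symm.toOrderEmbedding⟩

end TypeBounded

section Pullback

variable {f : Ordinal.{u} → Ordinal.{u} → Ordinal.{w}} {c : Ordinal.{w} → Ordinal.{x}}
  {J : Ordinal.{v} → Ordinal.{u}} {A : Set Ordinal.{u}} {θ : Ordinal.{v}}

theorem map_mem_pairImage (hJA : MapsTo J (Iio θ) A) (hJ : StrictMonoOn J (Iio θ))
    {α β : Ordinal.{v}} (hαβ : α < β) (hβ : β < θ) : f (J α) (J β) ∈ pairImage f A :=
  ⟨J α, hJA (hαβ.trans hβ), J β, hJA hβ, hJ (hαβ.trans hβ) hβ hαβ, rfl⟩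

theorem IsNormalColoring.pullback {κ : Ordinal.{u}} (hf : IsNormalColoring f κ) (hA : A ⊆ Iio κ)
    (hJA : MapsTo J (Iio θ) A) (hJ : StrictMonoOn J (Iio θ)) (hc : InjOn c (pairImage f A)) :
    IsNormalColoring (fun α β ↦ c (f (J α) (J β))) θ := by
  intro α β γ δ hαβ hβ hγδ hδ heq
  have hcol : f (J α) (J β) = f (J γ) (J δ) :=
    hc (map_mem_pairImage hJA hJ hαβ hβ) (map_mem_pairImage hJA hJ hγδ hδ) heq
  exact hJ.injOn hβ hδ <| hf _ _ _ _ (hJ (hαβ.trans hβ) hβ hαβ) (hA (hJA hβ))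
    (hJ (hγδ.trans hδ) hδ hγδ) (hA (hJA hδ)) hcol

theorem TypeBoundedOn.pullback {bd : Ordinal.{u}} {bd' : Ordinal.{v}} (hf : TypeBoundedOn f A bd)
    (hbd : Ordinal.lift.{v} bd = Ordinal.lift.{u} bd') (hJA : MapsTo J (Iio θ) A)
    (hJ : StrictMonoOn J (Iio θ)) (hc : InjOn c (pairImage f A)) :
    TypeBounded (fun α β ↦ c (f (J α) (J β))) θ bd' := by
  obtain ⟨δ, hδ, hfδ⟩ := hf
  obtain ⟨δ', hδ', hδδ'⟩ : ∃ δ' < bd', Ordinal.lift.{u} δ' = Ordinal.lift.{v} δ :=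
    Ordinal.lt_lift_iff.1 (hbd ▸ Ordinal.lift_lt.2 hδ)
  obtain ⟨e, -⟩ := exists_orderIso_of_image_lift_eq (image_lift_Iio_congr hδδ'.symm)
  refine ⟨δ', hδ', fun η β hηβ hβ ↦ ?_⟩
  have hη := hηβ.trans hβ
  obtain ⟨t⟩ := hfδ _ (hJA hη) _ (hJA hβ) (hJ hη hβ hηβ)
  let i : {ξ | ξ < β ∧ c (f (J ξ) (J β)) = c (f (J η) (J β))} →
      {ξ | ξ ∈ A ∧ ξ < J β ∧ f ξ (J β) = f (J η) (J β)} := fun ξ ↦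
    have hξ := ξ.2.1.trans hβ
    ⟨J ξ, hJA hξ, hJ hξ hβ ξ.2.1,
      hc (map_mem_pairImage hJA hJ ξ.2.1 hβ) (map_mem_pairImage hJA hJ hηβ hβ) ξ.2.2⟩
  have hi : StrictMono i := fun ξ ζ hξζ ↦ hJ (ξ.2.1.trans hβ) (ζ.2.1.trans hβ) hξζ
  exact ⟨((OrderEmbedding.ofStrictMono i hi).trans t).trans e.toOrderEmbedding⟩

theorem IsRainbow.image_of_pullback {B : Set Ordinal.{v}} (hJ : StrictMonoOn J B)
    (hB : IsRainbow (fun α β ↦ c (f (J α) (J β))) B) : IsRainbow f (J '' B) := by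
  rintro _ ⟨α, hα, rfl⟩ _ ⟨β, hβ, rfl⟩ _ ⟨γ, hγ, rfl⟩ _ ⟨δ, hδ, rfl⟩ hαβ hγδ heq
  obtain ⟨rfl, rfl⟩ := hB α hα β hβ γ hγ δ hδ ((hJ.lt_iff_lt hα hβ).1 hαβ)
    ((hJ.lt_iff_lt hγ hδ).1 hγδ) (congrArg c heq)
  exact ⟨rfl, rfl⟩

theorem IsRainbow.mono {B : Set Ordinal.{u}} (hB : IsRainbow f B) (hAB : A ⊆ B) : IsRainbow f A :=
  fun α hα β hβ γ hγ δ hδ ↦ hB α (hAB hα) β (hAB hβ) γ (hAB hγ) δ (hAB hδ)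

end Pullback

end Coloring

section Arrow

/-- The arrow `κ → (ν-st)²_{μ,<ν}`: every `f : [κ]² → μ` takes fewer than `ν` colors on the pairs
from some `A ⊆ κ` of order type `ν` that is stationary in `sup A`. The parameters live in
universe `0` and are lifted, so that the arrow can be compared across the universes of `f`. -/
def StationarySmallImageArrow (κ : Ordinal.{0}) (μ ν : Cardinal.{0}) : Prop :=
  ∀ f : Ordinal.{u} → Ordinal.{u} → Ordinal.{v},
    (∀ α β, α < β → β < Ordinal.lift.{u} κ → f α β < (Cardinal.lift.{v} μ).ord) →
    ∃ A ⊆ Iio (Ordinal.lift.{u} κ), HasOType A (Cardinal.lift.{u} ν).ord ∧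
      IsStationaryIn A (sSup A) ∧ #(pairImage f A) < Cardinal.lift.{v + 1} ν

/-- The arrow `ν →^poly (par(<ν))²_{<ν-t-bdd}`: every normal `<ν`-type bounded `f : [ν]² → ν` admits
a partition of `ν` into fewer than `ν` rainbow sets, the fibers of `g`. As in
`StationarySmallImageArrow`, `ν` lives in universe `0` and is lifted. -/
def RainbowPartitionArrow (ν : Cardinal.{0}) : Prop :=
  ∀ f : Ordinal.{u} → Ordinal.{u} → Ordinal.{v},
    (∀ α β, α < β → β < (Cardinal.lift.{u} ν).ord → f α β < (Cardinal.lift.{v} ν).ord) →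
    IsNormalColoring f (Cardinal.lift.{u} ν).ord →
    TypeBounded f (Cardinal.lift.{u} ν).ord (Cardinal.lift.{u} ν).ord →
    ∃ γ < (Cardinal.lift.{w} ν).ord, ∃ g : Ordinal.{u} → Ordinal.{w},
      (∀ ξ < (Cardinal.lift.{u} ν).ord, g ξ < γ) ∧
      ∀ i < γ, IsRainbow f {ξ | ξ < (Cardinal.lift.{u} ν).ord ∧ g ξ = i}

variable {κ : Ordinal.{0}} {μ ν : Cardinal.{0}}

theorem StationarySmallImageArrow.lift (h : StationarySmallImageArrow.{u, v} κ μ ν) :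
    StationarySmallImageArrow.{w, v} κ μ ν := by
  intro f hf
  have hcopy (α : Ordinal.{u}) (hα : α < Ordinal.lift.{u} κ) :
      ∃ β < Ordinal.lift.{w} κ, Ordinal.lift.{u} β = Ordinal.lift.{w} α := by
    apply Ordinal.lt_lift_iff.1
    simpa using Ordinal.lift_lt.{w}.2 hα
  choose! T hTκ hT using hcopy
  have hTlt {α β : Ordinal.{u}} (hα : α < Ordinal.lift.{u} κ) (hβ : β < Ordinal.lift.{u} κ) :
      T α < T β ↔ α < β := by
    rw [← Ordinal.lift_lt.{u}, hT α hα, hT β hβ, Ordinal.lift_lt]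
  obtain ⟨A, hA, hot, hst, himg⟩ := h (fun α β ↦ f (T α) (T β)) fun α β hαβ hβ ↦
    hf _ _ ((hTlt (hαβ.trans hβ) hβ).2 hαβ) (hTκ β hβ)
  have hTA : T '' A ⊆ Iio (Ordinal.lift.{w} κ) := image_subset_iff.2 fun α hα ↦ hTκ α (hA hα)
  have hAT : Ordinal.lift.{w} '' A = Ordinal.lift.{u} '' (T '' A) := by
    rw [image_image]
    exact image_congr fun α hα ↦ (hT α (hA hα)).symm
  have hsup : Ordinal.lift.{w} (sSup A) = Ordinal.lift.{u} (sSup (T '' A)) := by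
    rw [lift_sSup_of_bddAbove (bddAbove_Iio.mono hA), hAT,
      lift_sSup_of_bddAbove (bddAbove_Iio.mono hTA)]
  refine ⟨T '' A, hTA, hot.of_image_lift_eq hAT (by simp), hst.of_image_lift_eq hAT hsup,
    (mk_le_mk_of_subset ?_).trans_lt himg⟩
  rintro _ ⟨_, ⟨α, hα, rfl⟩, _, ⟨β, hβ, rfl⟩, hαβ, rfl⟩
  exact ⟨α, hα, β, hβ, (hTlt (hA hα) (hA hβ)).1 hαβ, rfl⟩

theorem StationarySmallImageArrow.exists_typeBoundedOn
    (h : StationarySmallImageArrow.{u, v} κ μ ν) {f : Ordinal.{u} → Ordinal.{u} → Ordinal.{w}}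
    (hf : TypeBounded f (Ordinal.lift.{u} κ) (Cardinal.lift.{u} (Order.succ μ)).ord) :
    ∃ A ⊆ Iio (Ordinal.lift.{u} κ), HasOType A (Cardinal.lift.{u} ν).ord ∧
      IsStationaryIn A (sSup A) ∧ TypeBoundedOn f A (Cardinal.lift.{u} ν).ord := by
  obtain ⟨γ, hγ, pos, hpos, hposγ⟩ := hf.exists_isPositionFun
  obtain ⟨e, heμ, he⟩ : ∃ e : Ordinal.{u} → Ordinal.{v},
      MapsTo e (Iio γ) (Iio (Cardinal.lift.{v} μ).ord) ∧ InjOn e (Iio γ) := by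
    apply exists_injOn_Iio_ord
    rw [lt_ord, Cardinal.lift_succ, Order.lt_succ_iff] at hγ
    rw [Cardinal.mk_Iio_ordinal]
    simpa using Cardinal.lift_le.{max (u + 1) (v + 1)}.2 hγ
  obtain ⟨A, hAκ, hA, hst, himg⟩ := h (fun η β ↦ e (pos η β)) fun η β hηβ hβ ↦
    heμ (hposγ ⟨η, hηβ.trans hβ, β, hβ, hηβ, rfl⟩)
  refine ⟨A, hAκ, hA, hst, (hpos.mono hAκ).typeBoundedOn ?_⟩
  have heA : InjOn e (pairImage pos A) := he.mono <| by
    rintro _ ⟨η, hη, β, hβ, hηβ, rfl⟩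
    exact hposγ ⟨η, hAκ hη, β, hAκ hβ, hηβ, rfl⟩
  rw [pairImage_comp] at himg
  rw [← Cardinal.lift_lt.{_, v + 1}, ← mk_image_eq_of_injOn_lift e _ heA]
  simpa using Cardinal.lift_lt.{_, u + 1}.2 himg

theorem RainbowPartitionArrow.exists_partition (h : RainbowPartitionArrow.{v, x, w} ν)
    (hν : ℵ₀ ≤ ν) {f : Ordinal.{u} → Ordinal.{u} → Ordinal.{y}} {κ : Ordinal.{u}}
    {A : Set Ordinal.{u}} (hAκ : A ⊆ Iio κ) (hA : HasOType A (Cardinal.lift.{u} ν).ord)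
    (hf : IsNormalColoring f κ) (hfA : TypeBoundedOn f A (Cardinal.lift.{u} ν).ord) :
    ∃ γ < (Cardinal.lift.{w} ν).ord, ∃ g : Ordinal.{u} → Ordinal.{w},
      MapsTo g A (Iio γ) ∧ ∀ i < γ, IsRainbow f {ξ ∈ A | g ξ = i} := by
  have hlift : Ordinal.lift.{v} (Cardinal.lift.{u} ν).ord =
      Ordinal.lift.{u} (Cardinal.lift.{v} ν).ord := by simp
  obtain ⟨J, hJA, hJ⟩ := exists_bijOn_strictMonoOn hA hlift
  have hcard : Cardinal.lift.{x + 1} #(pairImage f A) ≤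
      Cardinal.lift.{max (y + 1) (x + 1)} (Cardinal.lift.{x} ν) := by
    have hAA : #A * #A = Cardinal.lift.{u + 1} ν := by
      rw [hA.mk_eq, card_ord, Cardinal.lift_lift, mul_eq_self (by simpa using hν)]
    have hle := mk_pairImage_le f A
    rw [hAA, ← Cardinal.lift_le.{x + 1}] at hle
    rw [← Cardinal.lift_le.{u + 1}]
    simpa using hle
  obtain ⟨c, hcν, hc⟩ := exists_injOn_Iio_ord hcard
  obtain ⟨γ, hγ, g, hg, hrain⟩ := h (fun α β ↦ c (f (J α) (J β)))
    (fun α β hαβ hβ ↦ hcν (map_mem_pairImage hJA.mapsTo hJ hαβ hβ))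
    (hf.pullback hAκ hJA.mapsTo hJ hc) (hfA.pullback hlift hJA.mapsTo hJ hc)
  have hinv := hJA.invOn_invFunOn
  have hmaps := hJA.surjOn.mapsTo_invFunOn
  refine ⟨γ, hγ, g ∘ Function.invFunOn J (Iio _), fun ξ hξ ↦ hg _ (hmaps hξ), fun i hi ↦ ?_⟩
  have hfib : {ξ ∈ A | (g ∘ Function.invFunOn J (Iio _)) ξ = i} ⊆ J '' {ξ | ξ < _ ∧ g ξ = i} :=
    fun ξ hξ ↦ ⟨_, ⟨hmaps hξ.1, hξ.2⟩, hinv.2 hξ.1⟩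
  exact (IsRainbow.image_of_pullback (hJ.mono fun ξ hξ ↦ hξ.1) (hrain i hi)).mono hfib

end Arrow

theorem stmt8_general {κ : Ordinal.{0}} {μ ν : Cardinal.{0}} (hν : ν.IsRegular) (hν₀ : ℵ₀ < ν)
    (haleph : StationarySmallImageArrow.{v, w} κ μ ν)
    (hbeth : RainbowPartitionArrow.{x, y, z} ν)
    {f : Ordinal.{u} → Ordinal.{u} → Ordinal.{t}}
    (hnormal : IsNormalColoring f (Ordinal.lift.{u} κ))
    (hbdd : TypeBounded f (Ordinal.lift.{u} κ) (Cardinal.lift.{u} (Order.succ μ)).ord) :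
    ∃ A ⊆ Iio (Ordinal.lift.{u} κ), HasOType A (Cardinal.lift.{u} ν).ord ∧
      IsStationaryIn A (sSup A) ∧ IsRainbow f A := by
  obtain ⟨A, hAκ, hA, hst, hAbdd⟩ := haleph.lift.exists_typeBoundedOn hbdd
  obtain ⟨γ, hγ, g, hg, hrain⟩ := hbeth.exists_partition hν.aleph0_le hAκ hA hnormal hAbdd
  have hγ' : Cardinal.lift.{u} γ.card < Cardinal.lift.{z} (Cardinal.lift.{u} ν) := by
    simpa using Cardinal.lift_lt.{_, u}.2 (lt_ord.1 hγ)
  obtain ⟨i, hi, hfib, hfibst⟩ :=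
    hA.exists_fiber_isStationaryIn hν.lift (by simpa using hν₀) hst hγ' hg
  exact ⟨_, (sep_subset A _).trans hAκ, hfib, hfibst, hrain i hi⟩

/-- Corollary (thmsing): assume `(ℵ)`: every `f : [ℵ_{ω+1}]² → ℵ_ω` admits a subset of
order type `ω₁`, stationary in its supremum, with countable color image; and `(ℶ)`:
`ω₁ →^poly (par(<ω₁))²_{<ω₁-t-bdd}`. Then
`ℵ_{ω+1} →^poly (ω₁-st)²_{<ℵ_{ω+1}-t-bdd}`. -/
theorem stmt8
    (haleph : ∀ f : Ordinal → Ordinal → Ordinal,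
      (∀ α β : Ordinal, α < β → β < (Cardinal.aleph (Ordinal.omega0 + 1)).ord →
        f α β < (Cardinal.aleph Ordinal.omega0).ord) →
      ∃ A : Set Ordinal, A ⊆ Set.Iio (Cardinal.aleph (Ordinal.omega0 + 1)).ord ∧
        HasOType A (Cardinal.aleph 1).ord ∧ IsStationaryIn A (sSup A) ∧
        {ξ : Ordinal | ∃ α ∈ A, ∃ β ∈ A, α < β ∧ f α β = ξ}.Countable)
    (hbeth : ∀ f : Ordinal → Ordinal → Ordinal,
      (∀ α β : Ordinal, α < β → β < (Cardinal.aleph 1).ord → f α β < (Cardinal.aleph 1).ord) →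
      IsNormalColoring f (Cardinal.aleph 1).ord →
      TypeBounded f (Cardinal.aleph 1).ord (Cardinal.aleph 1).ord →
      ∃ γ : Ordinal, γ < (Cardinal.aleph 1).ord ∧ ∃ g : Ordinal → Ordinal,
        (∀ ξ : Ordinal, ξ < (Cardinal.aleph 1).ord → g ξ < γ) ∧
        ∀ i : Ordinal, i < γ →
          IsRainbow f {ξ : Ordinal | ξ < (Cardinal.aleph 1).ord ∧ g ξ = i}) :
    ∀ f : Ordinal → Ordinal → Ordinal,
      (∀ α β : Ordinal, α < β → β < (Cardinal.aleph (Ordinal.omega0 + 1)).ord →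
        f α β < (Cardinal.aleph (Ordinal.omega0 + 1)).ord) →
      IsNormalColoring f (Cardinal.aleph (Ordinal.omega0 + 1)).ord →
      TypeBounded f (Cardinal.aleph (Ordinal.omega0 + 1)).ord
        (Cardinal.aleph (Ordinal.omega0 + 1)).ord →
      ∃ A : Set Ordinal, A ⊆ Set.Iio (Cardinal.aleph (Ordinal.omega0 + 1)).ord ∧
        HasOType A (Cardinal.aleph 1).ord ∧ IsStationaryIn A (sSup A) ∧ IsRainbow f A := by
  intro f _ hnormal hbdd
  have haleph' : StationarySmallImageArrow (ℵ_ (ω + 1)).ord (ℵ_ ω) ℵ₁ := fun c hc ↦ by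
    obtain ⟨A, hAκ, hA, hst, himg⟩ := haleph c (by simpa using hc)
    have hpair : #(pairImage c A) < ℵ₁ := lt_aleph_one_iff.2 (le_aleph0_iff_set_countable.2 himg)
    exact ⟨A, by simpa using hAκ, by simpa using hA, hst, by simpa using hpair⟩
  have hbeth' : RainbowPartitionArrow ℵ₁ := fun c ↦ by simpa using hbeth c
  simpa using stmt8_general isRegular_aleph_one aleph0_lt_aleph_one haleph' hbeth'
    (f := f) (by simpa using hnormal) (by simpa using hbdd)
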